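/- For any family of modules {Mᵢ : i ∈ I}, the X-precover completing domain of the direct sum ⊕ᵢ Mᵢ equals the intersection of the X-precover completing domains of the Mᵢ. -/

import Mathlib

open CategoryTheory

universe u

variable {R : Type u} [Ring R]

/-- `g : X₀ ⟶ N` is an `𝒳`-precover of `N`. -/
def IsPrecover (𝒳 : ModuleCat.{u} R → Prop) {X₀ N : ModuleCat.{u} R} (g : X₀ ⟶ N) : Prop :=
  𝒳 X₀ ∧ ∀ X' : ModuleCat.{u} R, 𝒳 X' → ∀ f : X' ⟶ N, ∃ h : X' ⟶ X₀, h ≫ g = f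

/-- `𝒳` is a precovering class of left `R`-modules, closed under isomorphisms,
finite direct sums and direct summands. -/
structure PrecoveringClass (𝒳 : ModuleCat.{u} R → Prop) : Prop where
  precovering : ∀ N : ModuleCat.{u} R, ∃ (X₀ : ModuleCat.{u} R) (g : X₀ ⟶ N), IsPrecover 𝒳 g
  iso_closed : ∀ A B : ModuleCat.{u} R, Nonempty (A ≅ B) → 𝒳 A → 𝒳 B
  sum_closed : ∀ A B : ModuleCat.{u} R, 𝒳 A → 𝒳 B → 𝒳 (ModuleCat.of R (↥A × ↥B))
  summand_closed : ∀ A B : ModuleCat.{u} R, 𝒳 (ModuleCat.of R (↥A × ↥B)) → 𝒳 A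

/-- `N` belongs to the `𝒳`-precover completing domain `𝒳⁻¹(M)` of `M`:
every morphism `M ⟶ N` factors through a module in `𝒳`. -/
def MemDom (𝒳 : ModuleCat.{u} R → Prop) (M N : ModuleCat.{u} R) : Prop :=
  ∀ f : M ⟶ N, ∃ (X₀ : ModuleCat.{u} R) (h : M ⟶ X₀) (k : X₀ ⟶ N), 𝒳 X₀ ∧ h ≫ k = f

open Limits

lemma isSplitMono_cofan_inj {C : Type*} [Category* C] [HasZeroMorphisms C] {ι : Type*} {F : ι → C}
    {c : Cofan F} (hc : IsColimit c) (i : ι) : IsSplitMono (c.inj i) := by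
  classical
  exact .mk' { retraction := Cofan.IsColimit.desc hc (Pi.single i (𝟙 (F i))) }

section

variable {𝒳 : ModuleCat.{u} R → Prop} {M M' N X₀ : ModuleCat.{u} R} {g : X₀ ⟶ N}

lemma MemDom.of_isSplitMono (h : MemDom 𝒳 M' N) (s : M ⟶ M') [IsSplitMono s] :
    MemDom 𝒳 M N := by
  intro f
  obtain ⟨X, a, b, hX, hab⟩ := h (retraction s ≫ f)
  exact ⟨X, s ≫ a, b, hX, by rw [Category.assoc, hab, IsSplitMono.id_assoc]⟩

lemma IsPrecover.memDom_iff (hg : IsPrecover 𝒳 g) :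
    MemDom 𝒳 M N ↔ ∀ f : M ⟶ N, ∃ h : M ⟶ X₀, h ≫ g = f := by
  refine ⟨fun hM f => ?_, fun hM f => ?_⟩
  · obtain ⟨X, a, b, hX, rfl⟩ := hM f
    obtain ⟨b', rfl⟩ := hg.2 X hX b
    exact ⟨a ≫ b', Category.assoc a b' g⟩
  · obtain ⟨h, hf⟩ := hM f
    exact ⟨X₀, h, g, hg.1, hf⟩

variable {ι : Type*} {F : ι → ModuleCat.{u} R} {c : Cofan F}

-- Factoring every component through one and the same precover of `N` avoids infinite direct sums
-- of modules in `𝒳`.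
lemma IsPrecover.memDom_of_isColimit (hg : IsPrecover 𝒳 g) (hc : IsColimit c)
    (hF : ∀ i, MemDom 𝒳 (F i) N) : MemDom 𝒳 c.pt N := by
  refine hg.memDom_iff.mpr fun f => ?_
  choose h hh using fun i => hg.memDom_iff.mp (hF i) (c.inj i ≫ f)
  refine ⟨Cofan.IsColimit.desc hc h, Cofan.IsColimit.hom_ext hc _ _ fun i => ?_⟩
  rw [← Category.assoc, Cofan.IsColimit.fac, hh]

theorem stmt_5_general (hg : IsPrecover 𝒳 g) (hc : IsColimit c) :
    MemDom 𝒳 c.pt N ↔ ∀ i, MemDom 𝒳 (F i) N where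
  mp h i :=
    have := isSplitMono_cofan_inj hc i
    h.of_isSplitMono (c.inj i)
  mpr := hg.memDom_of_isColimit hc

end

theorem stmt_5 (𝒳 : ModuleCat.{u} R → Prop) (h𝒳 : PrecoveringClass 𝒳)
    (ι : Type u) (Mf : ι → ModuleCat.{u} R) (N : ModuleCat.{u} R) :
    MemDom 𝒳 (ModuleCat.of R (DirectSum ι fun i => ↥(Mf i))) N ↔
      ∀ i, MemDom 𝒳 (Mf i) N := by
  classical
  obtain ⟨_, _, hg⟩ := h𝒳.precovering N
  exact stmt_5_general hg (ModuleCat.coproductCoconeIsColimit Mf)
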